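/- Fix s ≥ 1. Let A be the 2s×2s lower-triangular matrix over k[X,Y], with rows and columns indexed 0,…,2s−1, defined for j ≤ i by: A(i,j) = z₂z₄ if i and j are both even; A(i,j) = −z₁z₄ if i is even and j is odd; A(i,j) = −z₂z₃ if i is odd and j is even; A(i,j) = z₁z₃ if i and j are both odd; and A(i,j) = 0 for j > i. Then there exists a 2s×2s matrix Ψ with entries in k[X,Y] such that A·Ψ = Ψ·A = F·I₂ₛ. -/

import Mathlib

/-!
Row and column coefficients separate: `A i j = r i * c j` for `j ≤ i`, where `r` alternates between
`z₄` and `-z₃`, and `c` between `z₂` and `-z₁`. Hence `A = diagonal r * L * diagonal c`, with `L`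
the lower-triangular matrix of ones, which has determinant `1`. The two diagonal matrices belong to
factorizations of `z₃ * z₄` and `z₁ * z₂`, the matrix `L` to one of `1`, and factorizations
multiply.
-/

open Matrix

/-- The pair of square matrices `(Φ, Ψ)` is a matrix factorization of the scalar `f`. Both
products are prescribed because `f` may be a zero divisor. -/
def IsMatrixFactorization {n R : Type*} [Fintype n] [DecidableEq n] [CommSemiring R]
    (f : R) (Φ Ψ : Matrix n n R) : Prop :=
  Φ * Ψ = f • (1 : Matrix n n R) ∧ Ψ * Φ = f • (1 : Matrix n n R)

namespace IsMatrixFactorization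

variable {n R : Type*} [Fintype n] [DecidableEq n]

section CommSemiring

variable [CommSemiring R] {f g : R} {Φ Ψ Φ' Ψ' : Matrix n n R}

protected theorem mul (h : IsMatrixFactorization f Φ Ψ) (h' : IsMatrixFactorization g Φ' Ψ') :
    IsMatrixFactorization (f * g) (Φ * Φ') (Ψ' * Ψ) := by
  constructor
  · calc Φ * Φ' * (Ψ' * Ψ) = Φ * (Φ' * Ψ') * Ψ := by simp only [Matrix.mul_assoc]
      _ = g • (Φ * Ψ) := by rw [h'.1, Matrix.mul_smul, Matrix.mul_one, Matrix.smul_mul]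
      _ = (f * g) • 1 := by rw [h.1, smul_smul, mul_comm]
  · calc Ψ' * Ψ * (Φ * Φ') = Ψ' * (Ψ * Φ) * Φ' := by simp only [Matrix.mul_assoc]
      _ = f • (Ψ' * Φ') := by rw [h.2, Matrix.mul_smul, Matrix.mul_one, Matrix.smul_mul]
      _ = (f * g) • 1 := by rw [h'.2, smul_smul]

protected theorem diagonal {d d' : n → R} (h : ∀ i, d i * d' i = f) :
    IsMatrixFactorization f (diagonal d) (diagonal d') := by
  simp only [IsMatrixFactorization, diagonal_mul_diagonal, mul_comm (d' _), h,
    smul_one_eq_diagonal, and_self]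

end CommSemiring

theorem nonsing_inv [CommRing R] {Φ : Matrix n n R} (h : IsUnit Φ.det) :
    IsMatrixFactorization 1 Φ Φ⁻¹ := by
  simp only [IsMatrixFactorization, one_smul, mul_nonsing_inv Φ h, nonsing_inv_mul Φ h, and_self]

end IsMatrixFactorization

section LowerOnes

variable (n R : Type*) [LinearOrder n]

/-- The lower-triangular matrix of ones, which sends a vector to its partial sums. It is the middle
factor of every lower-triangular matrix with entries of the form `r i * c j`. -/
def lowerOnes [Zero R] [One R] : Matrix n n R :=
  of fun i j => if j ≤ i then 1 else 0

theorem det_lowerOnes [Fintype n] [CommRing R] : (lowerOnes n R).det = 1 := by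
  have lower : (lowerOnes n R).IsLowerTriangular := fun _ _ hij => if_neg (not_le_of_gt hij)
  rw [det_of_isLowerTriangular _ lower]
  simp only [lowerOnes, of_apply, le_refl, if_true, Finset.prod_const_one]

variable {n R}

theorem diagonal_mul_lowerOnes_mul_diagonal [Fintype n] [NonAssocSemiring R] (r c : n → R) :
    diagonal r * lowerOnes n R * diagonal c = of fun i j => if j ≤ i then r i * c j else 0 := by
  ext i j
  simp only [mul_diagonal, diagonal_mul, lowerOnes, of_apply, mul_ite, mul_one, mul_zero, ite_mul,
    zero_mul]

theorem exists_isMatrixFactorization_of_lower [Fintype n] [CommRing R] {f g : R}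
    {r r' c c' : n → R} (hr : ∀ i, r i * r' i = f) (hc : ∀ i, c i * c' i = g) :
    ∃ Ψ, IsMatrixFactorization (f * g) (of fun i j => if j ≤ i then r i * c j else 0) Ψ := by
  have hL : IsMatrixFactorization 1 (lowerOnes n R) (lowerOnes n R)⁻¹ :=
    .nonsing_inv (det_lowerOnes n R ▸ isUnit_one)
  have h := ((IsMatrixFactorization.diagonal hr).mul hL).mul (.diagonal hc)
  rw [mul_one, diagonal_mul_lowerOnes_mul_diagonal] at h
  exact ⟨_, h⟩

end LowerOnes

theorem stmt_19_general {R : Type*} [CommRing R] (z1 z2 z3 z4 F : R) (hF : F = z1 * z2 * z3 * z4)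
    (n : ℕ) (A : Matrix (Fin n) (Fin n) R)
    (hA : ∀ i j : Fin n, A i j =
      if j.val ≤ i.val then
        (if i.val % 2 = 0 then
          (if j.val % 2 = 0 then z2 * z4 else -(z1 * z4))
        else
          (if j.val % 2 = 0 then -(z2 * z3) else z1 * z3))
      else 0) :
    ∃ Ψ, IsMatrixFactorization F A Ψ := by
  let r (i : Fin n) : R := if i.val % 2 = 0 then z4 else -z3
  let r' (i : Fin n) : R := if i.val % 2 = 0 then z3 else -z4
  let c (i : Fin n) : R := if i.val % 2 = 0 then z2 else -z1
  let c' (i : Fin n) : R := if i.val % 2 = 0 then z1 else -z2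
  have hr (i : Fin n) : r i * r' i = z3 * z4 := by grind
  have hc (i : Fin n) : c i * c' i = z1 * z2 := by grind
  have hArc : A = of fun i j => if j ≤ i then r i * c j else 0 := by
    ext i j
    simp only [hA, of_apply, Fin.le_def, r, c]
    split_ifs <;> ring
  have hF' : F = z3 * z4 * (z1 * z2) := by rw [hF]; ring
  rw [hArc, hF']
  exact exists_isMatrixFactorization_of_lower hr hc

/-- For `s ≥ 1`, the `2s×2s` lower-triangular matrix `A` with `A(i,j) = z₂z₄`
(`i,j` even), `−z₁z₄` (`i` even, `j` odd), `−z₂z₃` (`i` odd, `j` even), `z₁z₃`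
(`i,j` odd) for `j ≤ i`, and `0` for `j > i`, is part of a matrix factorization
of `F`: there is `Ψ` with `AΨ = ΨA = F·I₂ₛ`. -/
theorem stmt_19 {k : Type*} [Field k] (lam : k) (h0 : lam ≠ 0) (h1 : lam ≠ 1)
    (z1 z2 z3 z4 F : MvPolynomial (Fin 2) k)
    (hz1 : z1 = MvPolynomial.X 1) (hz2 : z2 = MvPolynomial.X 0)
    (hz3 : z3 = MvPolynomial.X 0 - MvPolynomial.X 1)
    (hz4 : z4 = MvPolynomial.X 0 - MvPolynomial.C lam * MvPolynomial.X 1)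
    (hF : F = z1 * z2 * z3 * z4)
    (s : ℕ) (hs : 1 ≤ s)
    (A : Matrix (Fin (2 * s)) (Fin (2 * s)) (MvPolynomial (Fin 2) k))
    (hA : ∀ i j : Fin (2 * s), A i j =
      if j.val ≤ i.val then
        (if i.val % 2 = 0 then
          (if j.val % 2 = 0 then z2 * z4 else -(z1 * z4))
        else
          (if j.val % 2 = 0 then -(z2 * z3) else z1 * z3))
      else 0) :
    ∃ Ψ : Matrix (Fin (2 * s)) (Fin (2 * s)) (MvPolynomial (Fin 2) k),
      A * Ψ = F • (1 : Matrix (Fin (2 * s)) (Fin (2 * s)) (MvPolynomial (Fin 2) k)) ∧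
      Ψ * A = F • (1 : Matrix (Fin (2 * s)) (Fin (2 * s)) (MvPolynomial (Fin 2) k)) :=
  stmt_19_general z1 z2 z3 z4 F hF (2 * s) A hA
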